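/- Let S = ⟨S, δ, L⟩ and S' = ⟨S', δ', L'⟩ be FLTSs witnessed w.r.t. fposΔPDL and Z a crisp directed simulation between them. Then for all x, y ∈ S, x', y' ∈ S', every formula φ of fposΔPDL, every program α of fpos∃ΔPDL and every program γ of fpos∀ΔPDL: (a) if Z(x,x') holds then φ^S(x) ≤ φ^S'(x'); (b) if Z(x,x') holds and α^S(x,y) > 0, then there exists y' ∈ S' with α^S(x,y) ≤ α^S'(x',y') and Z(y,y'); (c) if Z(x,x') holds and γ^S'(x',y') > 0, then there exists y ∈ S with γ^S'(x',y') ≤ γ^S(x,y) and Z(y,y'). -/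

import Mathlib

open unitInterval

noncomputable section
attribute [local instance] Classical.propDecidable

instance : Fact ((0:ℝ) ≤ 1) := ⟨zero_le_one⟩

/-- A left-continuous t-norm on the unit interval `[0,1]`: a commutative, associative
binary operation with neutral element `1`, increasing in both arguments, that
distributes over suprema of nonempty sets (left-continuity). -/
structure Tnorm where
  mul : I → I → I
  mul_comm : ∀ x y, mul x y = mul y x
  mul_assoc : ∀ x y z, mul (mul x y) z = mul x (mul y z)
  mul_one : ∀ x, mul x 1 = x
  mul_le_mul : ∀ {a b c d : I}, a ≤ b → c ≤ d → mul a c ≤ mul b d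
  left_continuous : ∀ (x : I) (s : Set I), s.Nonempty → mul x (sSup s) = sSup (mul x '' s)

/-- The residuum of a t-norm: `(x ⇒ y) = sup {z | z ⊗ x ≤ y}`. -/
def Tnorm.res (T : Tnorm) (x y : I) : I := sSup {z : I | T.mul z x ≤ y}

/-- A fuzzy labeled transition system over actions `A`, propositions `P`, states `St`. -/
structure FLTS (A P St : Type) where
  delta : St → A → St → I
  label : St → P → I

/-- A crisp directed simulation between two FLTSs. -/
def IsDirSimulation {A P S S' : Type} (M : FLTS A P S) (M' : FLTS A P S')
    (Z : S → S' → Prop) : Prop :=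
  (∀ x x', Z x x' → ∀ p, M.label x p ≤ M'.label x' p) ∧
  (∀ x y x' (ρ : A), Z x x' → 0 < M.delta x ρ y →
    ∃ y', M.delta x ρ y ≤ M'.delta x' ρ y' ∧ Z y y') ∧
  (∀ x x' y' (ρ : A), Z x x' → 0 < M'.delta x' ρ y' →
    ∃ y, M'.delta x' ρ y' ≤ M.delta x ρ y ∧ Z y y')

mutual
/-- Formulas of fposΔPDL. -/
inductive PForm (A P : Type) : Type
  | const : I → PForm A P
  | prop : P → PForm A P
  | baaz : PForm A P → PForm A P
  | and : PForm A P → PForm A P → PForm A P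
  | or : PForm A P → PForm A P → PForm A P
  | impl : I → PForm A P → PForm A P
  | dia : PEProg A P → PForm A P → PForm A P
  | box : PUProg A P → PForm A P → PForm A P
/-- Programs of fpos∃ΔPDL. -/
inductive PEProg (A P : Type) : Type
  | act : A → PEProg A P
  | comp : PEProg A P → PEProg A P → PEProg A P
  | union : PEProg A P → PEProg A P → PEProg A P
  | star : PEProg A P → PEProg A P
  | test : PForm A P → PEProg A P
/-- Programs of fpos∀ΔPDL; `testImp φ a` is the program `(φ→a)?`. -/
inductive PUProg (A P : Type) : Type
  | act : A → PUProg A P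
  | comp : PUProg A P → PUProg A P → PUProg A P
  | union : PUProg A P → PUProg A P → PUProg A P
  | star : PUProg A P → PUProg A P
  | testImp : PForm A P → I → PUProg A P
end

/-- The ⊗-product of the values of `r` along the path `x :: l`. -/
def chainProd (T : Tnorm) {St : Type} (r : St → St → I) : St → List St → I
  | _, [] => 1
  | x, y :: l => T.mul (r x y) (chainProd T r y l)

mutual
/-- Semantics of fposΔPDL formulas. -/
def pformSem (T : Tnorm) {A P St : Type} (M : FLTS A P St) : PForm A P → St → I
  | .const a, _ => a
  | .prop p, x => M.label x p
  | .baaz φ, x => if pformSem T M φ x = 1 then 1 else 0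
  | .and φ ψ, x => min (pformSem T M φ x) (pformSem T M ψ x)
  | .or φ ψ, x => max (pformSem T M φ x) (pformSem T M ψ x)
  | .impl a φ, x => T.res a (pformSem T M φ x)
  | .dia α φ, x => ⨆ y, T.mul (peSem T M α x y) (pformSem T M φ y)
  | .box γ φ, x => ⨅ y, T.res (puSem T M γ x y) (pformSem T M φ y)
/-- Semantics of fpos∃ΔPDL programs. -/
def peSem (T : Tnorm) {A P St : Type} (M : FLTS A P St) : PEProg A P → St → St → I
  | .act ρ, x, y => M.delta x ρ y
  | .comp α β, x, y => ⨆ z, T.mul (peSem T M α x z) (peSem T M β z y)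
  | .union α β, x, y => max (peSem T M α x y) (peSem T M β x y)
  | .star α, x, y =>
      sSup {v : I | ∃ l : List St, l.getLastD x = y ∧ v = chainProd T (peSem T M α) x l}
  | .test φ, x, y => if x = y then pformSem T M φ x else 0
/-- Semantics of fpos∀ΔPDL programs. -/
def puSem (T : Tnorm) {A P St : Type} (M : FLTS A P St) : PUProg A P → St → St → I
  | .act ρ, x, y => M.delta x ρ y
  | .comp α β, x, y => ⨆ z, T.mul (puSem T M α x z) (puSem T M β z y)
  | .union α β, x, y => max (puSem T M α x y) (puSem T M β x y)
  | .star α, x, y =>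
      sSup {v : I | ∃ l : List St, l.getLastD x = y ∧ v = chainProd T (puSem T M α) x l}
  | .testImp φ a, x, y => if x = y then T.res (pformSem T M φ x) a else 0
end

/-- An FLTS is witnessed w.r.t. fposΔPDL: every supremum (resp. infimum) occurring
in the semantic clauses is attained by a greatest (resp. least) element. -/
def WitnessedP (T : Tnorm) {A P St : Type} (M : FLTS A P St) : Prop :=
  (∀ (α : PEProg A P) (φ : PForm A P) (x : St), ∃ y : St, ∀ z : St,
      T.mul (peSem T M α x z) (pformSem T M φ z) ≤
        T.mul (peSem T M α x y) (pformSem T M φ y)) ∧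
  (∀ (γ : PUProg A P) (φ : PForm A P) (x : St), ∃ y : St, ∀ z : St,
      T.res (puSem T M γ x y) (pformSem T M φ y) ≤
        T.res (puSem T M γ x z) (pformSem T M φ z)) ∧
  (∀ (α β : PEProg A P) (x y : St), ∃ z : St, ∀ w : St,
      T.mul (peSem T M α x w) (peSem T M β w y) ≤
        T.mul (peSem T M α x z) (peSem T M β z y)) ∧
  (∀ (α β : PUProg A P) (x y : St), ∃ z : St, ∀ w : St,
      T.mul (puSem T M α x w) (puSem T M β w y) ≤
        T.mul (puSem T M α x z) (puSem T M β z y)) ∧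
  (∀ (α : PEProg A P) (x y : St), ∃ l : List St, l.getLastD x = y ∧
      ∀ l' : List St, l'.getLastD x = y →
        chainProd T (peSem T M α) x l' ≤ chainProd T (peSem T M α) x l) ∧
  (∀ (α : PUProg A P) (x y : St), ∃ l : List St, l.getLastD x = y ∧
      ∀ l' : List St, l'.getLastD x = y →
        chainProd T (puSem T M α) x l' ≤ chainProd T (puSem T M α) x l)

section Helpers

lemma Tnorm.mul_zero' (T : Tnorm) (x : I) : T.mul x 0 = 0 := by
  have h : T.mul x 0 ≤ T.mul 1 0 := T.mul_le_mul unitInterval.le_one' le_rfl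
  rw [T.mul_comm 1 0, T.mul_one] at h
  exact le_antisymm h unitInterval.nonneg'

lemma Tnorm.pos_left (T : Tnorm) {x y : I} (h : 0 < T.mul x y) : 0 < x := by
  rcases (unitInterval.nonneg' (t := x)).eq_or_lt with h0 | h0
  · rw [← h0, T.mul_comm, T.mul_zero'] at h
    exact absurd h (lt_irrefl _)
  · exact h0

lemma Tnorm.pos_right (T : Tnorm) {x y : I} (h : 0 < T.mul x y) : 0 < y := by
  rw [T.mul_comm] at h
  exact T.pos_left h

lemma Tnorm.res_le_res (T : Tnorm) {a b c d : I} (h : b ≤ a) (h' : c ≤ d) :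
    T.res a c ≤ T.res b d := by
  apply sSup_le_sSup
  intro z hz
  exact (T.mul_le_mul le_rfl h).trans (le_trans hz h')

lemma Tnorm.res_zero (T : Tnorm) (c : I) : T.res 0 c = 1 := by
  apply le_antisymm unitInterval.le_one'
  apply le_sSup
  show T.mul 1 0 ≤ c
  rw [T.mul_zero']
  exact unitInterval.nonneg'

def Matches {S S' : Type} (Z : S → S' → Prop) (r : S → S → I) (r' : S' → S' → I) : Prop :=
  ∀ x y x', Z x x' → 0 < r x y → ∃ y', r x y ≤ r' x' y' ∧ Z y y'

lemma Matches.chain (T : Tnorm) {S S' : Type} {Z : S → S' → Prop} {r : S → S → I}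
    {r' : S' → S' → I} (h : Matches Z r r') : ∀ (l : List S) (x : S) (x' : S'), Z x x' →
      0 < chainProd T r x l → ∃ l' : List S', chainProd T r x l ≤ chainProd T r' x' l' ∧
        Z (l.getLastD x) (l'.getLastD x')
  | [], x, x', hz, _ => ⟨[], le_rfl, hz⟩
  | y :: l, x, x', hz, hp => by
    have hp' : 0 < T.mul (r x y) (chainProd T r y l) := hp
    obtain ⟨y', h1, h2⟩ := h x y x' hz (T.pos_left hp')
    obtain ⟨l', h3, h4⟩ := Matches.chain T h l y y' h2 (T.pos_right hp')
    refine ⟨y' :: l', T.mul_le_mul h1 h3, ?_⟩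
    simpa only [List.getLastD_cons] using h4

lemma Matches.star (T : Tnorm) {S S' : Type} {Z : S → S' → Prop} {r : S → S → I}
    {r' : S' → S' → I} (h : Matches Z r r')
    (hw : ∀ x y : S, ∃ l : List S, l.getLastD x = y ∧
      ∀ l' : List S, l'.getLastD x = y → chainProd T r x l' ≤ chainProd T r x l) :
    Matches Z
      (fun x y => sSup {v : I | ∃ l : List S, l.getLastD x = y ∧ v = chainProd T r x l})
      (fun x y => sSup {v : I | ∃ l : List S', l.getLastD x = y ∧ v = chainProd T r' x l}) := by
  intro x y x' hz hp
  obtain ⟨l, hl, hmax⟩ := hw x y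
  have hle : sSup {v : I | ∃ l : List S, l.getLastD x = y ∧ v = chainProd T r x l}
      ≤ chainProd T r x l := by
    apply sSup_le
    rintro v ⟨l', h1, rfl⟩
    exact hmax l' h1
  obtain ⟨l', h1, h2⟩ := h.chain T l x x' hz (lt_of_lt_of_le hp hle)
  rw [hl] at h2
  exact ⟨l'.getLastD x', (hle.trans h1).trans (le_sSup ⟨l', rfl, rfl⟩), h2⟩

lemma Matches.comp (T : Tnorm) {S S' : Type} {Z : S → S' → Prop} {r s : S → S → I}
    {r' s' : S' → S' → I} (h : Matches Z r r') (k : Matches Z s s')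
    (hw : ∀ x y : S, ∃ z : S, ∀ w : S,
      T.mul (r x w) (s w y) ≤ T.mul (r x z) (s z y)) :
    Matches Z (fun x y => ⨆ z, T.mul (r x z) (s z y))
      (fun x y => ⨆ z, T.mul (r' x z) (s' z y)) := by
  intro x y x' hz hp
  obtain ⟨z, hmax⟩ := hw x y
  have hle : (⨆ z, T.mul (r x z) (s z y)) ≤ T.mul (r x z) (s z y) := iSup_le hmax
  have hp' := lt_of_lt_of_le hp hle
  obtain ⟨z', h1, h2⟩ := h x z x' hz (T.pos_left hp')
  obtain ⟨y', h3, h4⟩ := k z y z' h2 (T.pos_right hp')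
  exact ⟨y', (hle.trans (T.mul_le_mul h1 h3)).trans
    (le_iSup (fun z => T.mul (r' x' z) (s' z y')) z'), h4⟩

lemma Matches.union {S S' : Type} {Z : S → S' → Prop} {r s : S → S → I}
    {r' s' : S' → S' → I} (h : Matches Z r r') (k : Matches Z s s') :
    Matches Z (fun x y => max (r x y) (s x y)) (fun x y => max (r' x y) (s' x y)) := by
  intro x y x' hz hp
  show ∃ y', max (r x y) (s x y) ≤ max (r' x' y') (s' x' y') ∧ Z y y'
  replace hp : 0 < max (r x y) (s x y) := hp
  rcases le_total (r x y) (s x y) with hc | hc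
  · rw [max_eq_right hc] at hp ⊢
    obtain ⟨y', h1, h2⟩ := k x y x' hz hp
    exact ⟨y', h1.trans (le_max_right _ _), h2⟩
  · rw [max_eq_left hc] at hp ⊢
    obtain ⟨y', h1, h2⟩ := h x y x' hz hp
    exact ⟨y', h1.trans (le_max_left _ _), h2⟩

lemma Matches.test {S S' : Type} {Z : S → S' → Prop} {f : S → I} {f' : S' → I}
    (h : ∀ x x', Z x x' → f x ≤ f' x') :
    Matches Z (fun x y => if x = y then f x else 0) (fun x y => if x = y then f' x else 0) := by
  intro x y x' hz hp
  by_cases hxy : x = y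
  · subst hxy
    exact ⟨x', by simpa using h x x' hz, hz⟩
  · simp [hxy] at hp

mutual

theorem pform_pres {A P S S' : Type} (T : Tnorm) (M : FLTS A P S) (M' : FLTS A P S')
    (hM : WitnessedP T M) (hM' : WitnessedP T M')
    (Z : S → S' → Prop) (hZ : IsDirSimulation M M' Z) :
    ∀ (φ : PForm A P) (x : S) (x' : S'), Z x x' → pformSem T M φ x ≤ pformSem T M' φ x'
  | .const a, x, x', hz => by simp only [pformSem]; exact le_rfl
  | .prop p, x, x', hz => by simp only [pformSem]; exact hZ.1 x x' hz p
  | .baaz φ, x, x', hz => by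
    have ih := pform_pres T M M' hM hM' Z hZ φ x x' hz
    simp only [pformSem]
    by_cases h : pformSem T M φ x = 1
    · rw [h] at ih
      rw [if_pos h, if_pos (le_antisymm unitInterval.le_one' ih)]
    · rw [if_neg h]
      exact unitInterval.nonneg'
  | .and φ ψ, x, x', hz => by
    have ih := pform_pres T M M' hM hM' Z hZ φ x x' hz
    have ih2 := pform_pres T M M' hM hM' Z hZ ψ x x' hz
    simp only [pformSem]
    exact min_le_min ih ih2
  | .or φ ψ, x, x', hz => by
    have ih := pform_pres T M M' hM hM' Z hZ φ x x' hz
    have ih2 := pform_pres T M M' hM hM' Z hZ ψ x x' hz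
    simp only [pformSem]
    exact max_le_max ih ih2
  | .impl a φ, x, x', hz => by
    have ih := pform_pres T M M' hM hM' Z hZ φ x x' hz
    simp only [pformSem]
    exact T.res_le_res le_rfl ih
  | .dia α φ, x, x', hz => by
    have ih := pform_pres T M M' hM hM' Z hZ φ
    have ih2 := pe_pres T M M' hM hM' Z hZ α
    simp only [pformSem]
    apply iSup_le
    intro y
    rcases (unitInterval.nonneg' (t := peSem T M α x y)).eq_or_lt with h0 | h0
    · rw [← h0, T.mul_comm, T.mul_zero']
      exact unitInterval.nonneg'
    · obtain ⟨y', h1, h2⟩ := ih2 x y x' hz h0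
      exact (T.mul_le_mul h1 (ih y y' h2)).trans
        (le_iSup (fun y => T.mul (peSem T M' α x' y) (pformSem T M' φ y)) y')
  | .box γ φ, x, x', hz => by
    have ih := pform_pres T M M' hM hM' Z hZ φ
    have ih2 := pu_pres T M M' hM hM' Z hZ γ
    simp only [pformSem]
    apply le_iInf
    intro y'
    rcases (unitInterval.nonneg' (t := puSem T M' γ x' y')).eq_or_lt with h0 | h0
    · rw [← h0, T.res_zero]
      exact unitInterval.le_one'
    · obtain ⟨y, h1, h2⟩ := ih2 x' y' x hz h0
      exact (iInf_le (fun y => T.res (puSem T M γ x y) (pformSem T M φ y)) y).trans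
        (T.res_le_res h1 (ih y y' h2))

theorem pe_pres {A P S S' : Type} (T : Tnorm) (M : FLTS A P S) (M' : FLTS A P S')
    (hM : WitnessedP T M) (hM' : WitnessedP T M')
    (Z : S → S' → Prop) (hZ : IsDirSimulation M M' Z) :
    ∀ (α : PEProg A P), Matches Z (peSem T M α) (peSem T M' α)
  | .act ρ => by
    intro x y x' hz hp
    simp only [peSem] at hp ⊢
    exact hZ.2.1 x y x' ρ hz hp
  | .comp α β => by
    have h := Matches.comp T (pe_pres T M M' hM hM' Z hZ α) (pe_pres T M M' hM hM' Z hZ β)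
      (hM.2.2.1 α β)
    intro x y x' hz hp
    simp only [peSem] at hp ⊢
    exact h x y x' hz hp
  | .union α β => by
    have h := Matches.union (pe_pres T M M' hM hM' Z hZ α) (pe_pres T M M' hM hM' Z hZ β)
    intro x y x' hz hp
    simp only [peSem] at hp ⊢
    exact h x y x' hz hp
  | .star α => by
    have h := Matches.star T (pe_pres T M M' hM hM' Z hZ α) (hM.2.2.2.2.1 α)
    intro x y x' hz hp
    simp only [peSem] at hp ⊢
    exact h x y x' hz hp
  | .test φ => by
    have h := Matches.test (pform_pres T M M' hM hM' Z hZ φ)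
    intro x y x' hz hp
    simp only [peSem] at hp ⊢
    exact h x y x' hz hp

theorem pu_pres {A P S S' : Type} (T : Tnorm) (M : FLTS A P S) (M' : FLTS A P S')
    (hM : WitnessedP T M) (hM' : WitnessedP T M')
    (Z : S → S' → Prop) (hZ : IsDirSimulation M M' Z) :
    ∀ (γ : PUProg A P), Matches (fun x' x => Z x x') (puSem T M' γ) (puSem T M γ)
  | .act ρ => by
    intro x y x' hz hp
    simp only [puSem] at hp ⊢
    exact hZ.2.2 x' x y ρ hz hp
  | .comp α β => by
    have h := Matches.comp T (pu_pres T M M' hM hM' Z hZ α) (pu_pres T M M' hM hM' Z hZ β)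
      (hM'.2.2.2.1 α β)
    intro x y x' hz hp
    simp only [puSem] at hp ⊢
    exact h x y x' hz hp
  | .union α β => by
    have h := Matches.union (pu_pres T M M' hM hM' Z hZ α) (pu_pres T M M' hM hM' Z hZ β)
    intro x y x' hz hp
    simp only [puSem] at hp ⊢
    exact h x y x' hz hp
  | .star α => by
    have h := Matches.star T (pu_pres T M M' hM hM' Z hZ α) (hM'.2.2.2.2.2 α)
    intro x y x' hz hp
    simp only [puSem] at hp ⊢
    exact h x y x' hz hp
  | .testImp φ a => by
    have ih := pform_pres T M M' hM hM' Z hZ φ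
    have h := Matches.test (Z := fun x' x => Z x x')
      (f := fun x' => T.res (pformSem T M' φ x') a) (f' := fun x => T.res (pformSem T M φ x) a)
      (fun x' x hz => T.res_le_res (ih x x' hz) le_rfl)
    intro x y x' hz hp
    simp only [puSem] at hp ⊢
    exact h x y x' hz hp

end

end Helpers

/-- Preservation lemma for crisp directed simulations between FLTSs witnessed w.r.t.
fposΔPDL: (a) fposΔPDL formulas are preserved, (b) positive fpos∃ΔPDL program
transitions are matched forward, (c) positive fpos∀ΔPDL program transitions are
matched backward. -/
theorem preservation_lemma_dirSimulation_fposPDL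
    {A P S S' : Type} [Nonempty A] [Nonempty P] [Nonempty S] [Nonempty S']
    (T : Tnorm) (M : FLTS A P S) (M' : FLTS A P S')
    (hM : WitnessedP T M) (hM' : WitnessedP T M')
    (Z : S → S' → Prop) (hZ : IsDirSimulation M M' Z) :
    (∀ (φ : PForm A P) (x : S) (x' : S'),
      Z x x' → pformSem T M φ x ≤ pformSem T M' φ x') ∧
    (∀ (α : PEProg A P) (x y : S) (x' : S'),
      Z x x' → 0 < peSem T M α x y →
        ∃ y' : S', peSem T M α x y ≤ peSem T M' α x' y' ∧ Z y y') ∧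
    (∀ (γ : PUProg A P) (x : S) (x' y' : S'),
      Z x x' → 0 < puSem T M' γ x' y' →
        ∃ y : S, puSem T M' γ x' y' ≤ puSem T M γ x y ∧ Z y y') := by
  exact ⟨pform_pres T M M' hM hM' Z hZ, pe_pres T M M' hM hM' Z hZ,
    fun γ x x' y' hz hp => pu_pres T M M' hM hM' Z hZ γ x' y' x hz hp⟩
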